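/- Let 1 ≤ p < ∞ and let f ∈ L¹(μ) be nonnegative with f ≠ 0 and with f·log f integrable. Then for every x ∈ L^p(μ) with ‖x‖_p ≤ 1 such that f·log|x| is integrable, one has ∫_S f·log|x| dμ ≤ (1/p)·Φ₁(f). Moreover, the choice x = (f/‖f‖₁)^{1/p} is admissible (‖x‖_p = 1 and f·log|x| is integrable) and achieves equality. Hence the indicator of L^p satisfies Φ_{L^p}(f) = (1/p)·Φ₁(f). -/

import Mathlib

/-!
Since `f log|x| = (1/p) f log(|x|^p)`, only the densities `g = |x|^p`, of mass at most one, matter.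
For those the tangent-line bound `log t ≤ t - 1` at `t = g / f`, multiplied by `f` and integrated,
is Gibbs' inequality `∫ f log g ≤ ∫ f log f + ∫ g - ∫ f`. Rescaling `g` to the mass of `f` turns it
into the log-sum inequality `∫ f log g ≤ Φ₁(f) + (∫ f) log (∫ g)`, whose last term is nonpositive.
The tangent touches at `t = 1`, so equality holds for the normalised density `g = f / ‖f‖₁`.
-/

open MeasureTheory

/-- The entropy functional (indicator of `L¹`):
`Φ₁(f) = ∫ f·log f dμ − ‖f‖₁·log ‖f‖₁` (with `Real.log 0 = 0`, so `Φ₁(0) = 0`). -/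
noncomputable def Phi1 {S : Type*} [MeasurableSpace S] (μ : Measure S) (f : S → ℝ) : ℝ :=
  ∫ s, f s * Real.log (f s) ∂μ - (∫ s, f s ∂μ) * Real.log (∫ s, f s ∂μ)

section LogSum

theorem mul_log_le_mul_log_self_add_sub {a b : ℝ} (ha : 0 ≤ a) (hb : 0 ≤ b)
    (hab : a = 0 ∨ b ≠ 0) : a * Real.log b ≤ a * Real.log a + (b - a) := by
  rcases ha.eq_or_lt with rfl | ha_pos
  · simpa using hb
  have hb_pos : 0 < b := hb.lt_of_ne' (hab.resolve_left ha_pos.ne')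
  have tangent : Real.log b - Real.log a ≤ b / a - 1 := by
    rw [← Real.log_div hb_pos.ne' ha_pos.ne']
    exact Real.log_le_sub_one_of_pos (div_pos hb_pos ha_pos)
  have scaled : a * (Real.log b - Real.log a) ≤ b - a := by
    calc a * (Real.log b - Real.log a) ≤ a * (b / a - 1) := by gcongr
      _ = b - a := by field_simp
  linarith

variable {S : Type*} [MeasurableSpace S] {μ : Measure S} {f g : S → ℝ}

theorem integral_pos_of_not_ae_eq_zero (hf : Integrable f μ) (hf_nonneg : 0 ≤ᵐ[μ] f)
    (hf_ne : ¬ f =ᵐ[μ] 0) : 0 < ∫ s, f s ∂μ :=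
  (integral_nonneg_of_ae hf_nonneg).lt_of_ne' fun h =>
    hf_ne ((integral_eq_zero_iff_of_nonneg_ae hf_nonneg hf).1 h)

theorem integral_mul_log_le_integral_mul_log_self_add_sub (hf : Integrable f μ)
    (hf_nonneg : 0 ≤ᵐ[μ] f) (hflog : Integrable (fun s => f s * Real.log (f s)) μ)
    (hg : Integrable g μ) (hg_nonneg : 0 ≤ᵐ[μ] g)
    (hfg : Integrable (fun s => f s * Real.log (g s)) μ) (hac : ∀ᵐ s ∂μ, f s = 0 ∨ g s ≠ 0) :
    ∫ s, f s * Real.log (g s) ∂μ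
      ≤ ∫ s, f s * Real.log (f s) ∂μ + (∫ s, g s ∂μ - ∫ s, f s ∂μ) := by
  have pointwise : (fun s => f s * Real.log (g s)) ≤ᵐ[μ]
      fun s => f s * Real.log (f s) + (g s - f s) := by
    filter_upwards [hf_nonneg, hg_nonneg, hac] with s hfs hgs hs
    exact mul_log_le_mul_log_self_add_sub hfs hgs hs
  have hgf : Integrable (fun s => g s - f s) μ := hg.sub hf
  calc ∫ s, f s * Real.log (g s) ∂μ
      ≤ ∫ s, f s * Real.log (f s) + (g s - f s) ∂μ :=
        integral_mono_ae hfg (hflog.add hgf) pointwise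
    _ = ∫ s, f s * Real.log (f s) ∂μ + (∫ s, g s ∂μ - ∫ s, f s ∂μ) := by
        rw [integral_add hflog hgf, integral_sub hg hf]

theorem integral_mul_log_le_Phi1_add_mul_log (hf : Integrable f μ)
    (hf_nonneg : 0 ≤ᵐ[μ] f) (hflog : Integrable (fun s => f s * Real.log (f s)) μ)
    (hg : Integrable g μ) (hg_nonneg : 0 ≤ᵐ[μ] g)
    (hfg : Integrable (fun s => f s * Real.log (g s)) μ) (hac : ∀ᵐ s ∂μ, f s = 0 ∨ g s ≠ 0) :
    ∫ s, f s * Real.log (g s) ∂μ ≤ Phi1 μ f + (∫ s, f s ∂μ) * Real.log (∫ s, g s ∂μ) := by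
  by_cases hf_zero : f =ᵐ[μ] 0
  · have h_mul_log (h : S → ℝ) : ∫ s, f s * Real.log (h s) ∂μ = 0 :=
      integral_eq_zero_of_ae (hf_zero.mono fun s hs => by simp [hs])
    simp [Phi1, h_mul_log, integral_eq_zero_of_ae hf_zero]
  have hg_ne : ¬ g =ᵐ[μ] 0 := fun hg_zero => hf_zero <| by
    filter_upwards [hg_zero, hac] with s hgs hs
    exact hs.resolve_right (not_not.2 hgs)
  have hf_pos := integral_pos_of_not_ae_eq_zero hf hf_nonneg hf_zero
  have hg_pos := integral_pos_of_not_ae_eq_zero hg hg_nonneg hg_ne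
  set c := (∫ s, f s ∂μ) / ∫ s, g s ∂μ with hc
  have hc_pos : 0 < c := div_pos hf_pos hg_pos
  have log_scale : (fun s => f s * Real.log (c * g s)) =ᵐ[μ]
      fun s => f s * Real.log c + f s * Real.log (g s) := by
    filter_upwards [hac] with s hs
    rcases hs with hfs | hgs
    · simp [hfs]
    · rw [Real.log_mul hc_pos.ne' hgs, mul_add]
  have gibbs := integral_mul_log_le_integral_mul_log_self_add_sub hf hf_nonneg hflog
    (hg.const_mul c) (hg_nonneg.mono fun s hgs => mul_nonneg hc_pos.le hgs)
    (((hf.mul_const _).add hfg).congr log_scale.symm)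
    (hac.mono fun s hs => hs.imp_right (mul_ne_zero hc_pos.ne'))
  have same_mass : ∫ s, c * g s ∂μ = ∫ s, f s ∂μ := by
    rw [integral_const_mul, hc, div_mul_cancel₀ _ hg_pos.ne']
  rw [same_mass, sub_self, add_zero, integral_congr_ae log_scale,
    integral_add (hf.mul_const _) hfg, integral_mul_const, hc,
    Real.log_div hf_pos.ne' hg_pos.ne'] at gibbs
  rw [Phi1]
  linarith

end LogSum

section Admissible

variable {S : Type*} [MeasurableSpace S] {μ : Measure S} {p : ℝ} {f x : S → ℝ}

/-- The competitors `x` in the supremum defining the indicator `Φ_{L^p}(f)`: elements of the unit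
ball of `L^p(μ)` for which `f log|x|` is integrable. Since `Real.log 0 = 0`, the last field is
needed to exclude those `x` that vanish where `f` does not, where `f log|x|` should be `-∞`. -/
structure IsAdmissible (μ : Measure S) (p : ℝ) (f x : S → ℝ) : Prop where
  aestronglyMeasurable : AEStronglyMeasurable x μ
  integrable_rpow : Integrable (fun s => |x s| ^ p) μ
  integral_rpow_le_one : ∫ s, |x s| ^ p ∂μ ≤ 1
  integrable_mul_log : Integrable (fun s => f s * Real.log |x s|) μ
  ae_eq_zero_or_ne_zero : ∀ᵐ s ∂μ, f s = 0 ∨ x s ≠ 0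

theorem IsAdmissible.integral_mul_log_le (hx : IsAdmissible μ p f x) (hp : 0 < p)
    (hf : Integrable f μ) (hf_nonneg : 0 ≤ᵐ[μ] f)
    (hflog : Integrable (fun s => f s * Real.log (f s)) μ) :
    ∫ s, f s * Real.log |x s| ∂μ ≤ (1 / p) * Phi1 μ f := by
  have log_rpow : (fun s => f s * Real.log (|x s| ^ p)) =ᵐ[μ]
      fun s => p * (f s * Real.log |x s|) := by
    filter_upwards [hx.ae_eq_zero_or_ne_zero] with s hs
    rcases hs with hfs | hxs
    · simp [hfs]
    · rw [Real.log_rpow (abs_pos.2 hxs), mul_left_comm]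
  have log_mass_nonpos : (∫ s, f s ∂μ) * Real.log (∫ s, |x s| ^ p ∂μ) ≤ 0 :=
    mul_nonpos_of_nonneg_of_nonpos (integral_nonneg_of_ae hf_nonneg) <|
      Real.log_nonpos (integral_nonneg fun s => by positivity) hx.integral_rpow_le_one
  have log_sum := integral_mul_log_le_Phi1_add_mul_log hf hf_nonneg hflog hx.integrable_rpow
    (.of_forall fun s => by positivity)
    ((hx.integrable_mul_log.const_mul p).congr log_rpow.symm)
    (hx.ae_eq_zero_or_ne_zero.mono fun s =>
      Or.imp_right fun hxs => (Real.rpow_pos_of_pos (abs_pos.2 hxs) p).ne')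
  rw [integral_congr_ae log_rpow, integral_const_mul] at log_sum
  rw [one_div_mul_eq_div, le_div_iff₀' hp]
  linarith

end Admissible

section Maximizer

theorem abs_rpow_one_div_rpow {a p : ℝ} (ha : 0 ≤ a) (hp : p ≠ 0) : |a ^ (1 / p)| ^ p = a := by
  rw [abs_of_nonneg (Real.rpow_nonneg ha _), one_div, Real.rpow_inv_rpow ha hp]

theorem mul_log_abs_div_rpow {a c : ℝ} (ha : 0 ≤ a) (hc : 0 < c) (q : ℝ) :
    a * Real.log |(a / c) ^ q| = q * (a * Real.log a - a * Real.log c) := by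
  rcases ha.eq_or_lt with rfl | ha_pos
  · simp
  · rw [Real.log_abs, Real.log_rpow (div_pos ha_pos hc), Real.log_div ha_pos.ne' hc.ne']
    ring

variable {S : Type*} [MeasurableSpace S] {μ : Measure S} {p : ℝ} {f : S → ℝ}

/-- The function `(f / ‖f‖₁)^{1/p}` at which the supremum defining `Φ_{L^p}(f)` is attained. For
`f ≥ 0` the norm `‖f‖₁` is `∫ f`, which is how it is written here. -/
noncomputable def entropyMaximizer (μ : Measure S) (p : ℝ) (f : S → ℝ) (s : S) : ℝ :=
  (f s / ∫ u, f u ∂μ) ^ (1 / p)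

theorem abs_entropyMaximizer_rpow_ae_eq (hp : p ≠ 0) (hf_nonneg : 0 ≤ᵐ[μ] f) :
    (fun s => |entropyMaximizer μ p f s| ^ p) =ᵐ[μ] fun s => f s / ∫ u, f u ∂μ :=
  hf_nonneg.mono fun _ hfs =>
    abs_rpow_one_div_rpow (div_nonneg hfs (integral_nonneg_of_ae hf_nonneg)) hp

theorem integral_abs_entropyMaximizer_rpow (hp : p ≠ 0) (hf : Integrable f μ)
    (hf_nonneg : 0 ≤ᵐ[μ] f) (hf_ne : ¬ f =ᵐ[μ] 0) :
    ∫ s, |entropyMaximizer μ p f s| ^ p ∂μ = 1 := by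
  rw [integral_congr_ae (abs_entropyMaximizer_rpow_ae_eq hp hf_nonneg), integral_div,
    div_self (integral_pos_of_not_ae_eq_zero hf hf_nonneg hf_ne).ne']

theorem mul_log_abs_entropyMaximizer_ae_eq (hf : Integrable f μ) (hf_nonneg : 0 ≤ᵐ[μ] f)
    (hf_ne : ¬ f =ᵐ[μ] 0) :
    (fun s => f s * Real.log |entropyMaximizer μ p f s|) =ᵐ[μ]
      fun s => (1 / p) * (f s * Real.log (f s) - f s * Real.log (∫ u, f u ∂μ)) :=
  hf_nonneg.mono fun _ hfs =>
    mul_log_abs_div_rpow hfs (integral_pos_of_not_ae_eq_zero hf hf_nonneg hf_ne) (1 / p)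

theorem integral_mul_log_abs_entropyMaximizer (hf : Integrable f μ) (hf_nonneg : 0 ≤ᵐ[μ] f)
    (hf_ne : ¬ f =ᵐ[μ] 0) (hflog : Integrable (fun s => f s * Real.log (f s)) μ) :
    ∫ s, f s * Real.log |entropyMaximizer μ p f s| ∂μ = (1 / p) * Phi1 μ f := by
  rw [integral_congr_ae (mul_log_abs_entropyMaximizer_ae_eq hf hf_nonneg hf_ne),
    integral_const_mul, integral_sub hflog (hf.mul_const _), integral_mul_const, Phi1]

theorem isAdmissible_entropyMaximizer (hp : p ≠ 0) (hf : Integrable f μ)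
    (hf_nonneg : 0 ≤ᵐ[μ] f) (hf_ne : ¬ f =ᵐ[μ] 0)
    (hflog : Integrable (fun s => f s * Real.log (f s)) μ) :
    IsAdmissible μ p f (entropyMaximizer μ p f) where
  aestronglyMeasurable :=
    ((hf.aemeasurable.div_const _).pow_const (1 / p)).aestronglyMeasurable
  integrable_rpow :=
    (hf.div_const _).congr (abs_entropyMaximizer_rpow_ae_eq hp hf_nonneg).symm
  integral_rpow_le_one := (integral_abs_entropyMaximizer_rpow hp hf hf_nonneg hf_ne).le
  integrable_mul_log := ((hflog.sub (hf.mul_const _)).const_mul (1 / p)).congr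
    (mul_log_abs_entropyMaximizer_ae_eq hf hf_nonneg hf_ne).symm
  ae_eq_zero_or_ne_zero := by
    have hf_pos := integral_pos_of_not_ae_eq_zero hf hf_nonneg hf_ne
    filter_upwards [hf_nonneg] with s hfs
    exact hfs.eq_or_lt.imp Eq.symm fun h => (Real.rpow_pos_of_pos (div_pos h hf_pos) _).ne'

end Maximizer

theorem stmt1_general {S : Type*} [MeasurableSpace S] (μ : Measure S)
    (p : ℝ) (hp : 0 < p)
    (f : S → ℝ) (hf : Integrable f μ) (hf_nonneg : 0 ≤ᵐ[μ] f) (hf_ne : ¬ f =ᵐ[μ] 0)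
    (hflog : Integrable (fun s => f s * Real.log (f s)) μ) :
    (∀ x : S → ℝ, AEStronglyMeasurable x μ → Integrable (fun s => |x s| ^ p) μ →
        (∫ s, |x s| ^ p ∂μ) ≤ 1 →
        Integrable (fun s => f s * Real.log |x s|) μ →
        (∀ᵐ s ∂μ, f s = 0 ∨ x s ≠ 0) →
        (∫ s, f s * Real.log |x s| ∂μ) ≤ (1 / p) * Phi1 μ f) ∧
    (AEStronglyMeasurable (fun s => (f s / ∫ u, f u ∂μ) ^ (1 / p)) μ ∧
      Integrable (fun s => |(f s / ∫ u, f u ∂μ) ^ (1 / p)| ^ p) μ ∧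
      (∫ s, |(f s / ∫ u, f u ∂μ) ^ (1 / p)| ^ p ∂μ) = 1 ∧
      Integrable (fun s => f s * Real.log |(f s / ∫ u, f u ∂μ) ^ (1 / p)|) μ ∧
      (∫ s, f s * Real.log |(f s / ∫ u, f u ∂μ) ^ (1 / p)| ∂μ) = (1 / p) * Phi1 μ f) ∧
    IsGreatest
      {r : ℝ | ∃ x : S → ℝ, AEStronglyMeasurable x μ ∧ Integrable (fun s => |x s| ^ p) μ ∧
        (∫ s, |x s| ^ p ∂μ) ≤ 1 ∧
        Integrable (fun s => f s * Real.log |x s|) μ ∧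
        (∀ᵐ s ∂μ, f s = 0 ∨ x s ≠ 0) ∧
        r = ∫ s, f s * Real.log |x s| ∂μ}
      ((1 / p) * Phi1 μ f) := by
  have upper_bound {x : S → ℝ} (hx : IsAdmissible μ p f x) :=
    hx.integral_mul_log_le hp hf hf_nonneg hflog
  obtain ⟨hmeas, hrpow, hle, hlog, hac⟩ :=
    isAdmissible_entropyMaximizer hp.ne' hf hf_nonneg hf_ne hflog
  have hmax_norm := integral_abs_entropyMaximizer_rpow hp.ne' hf hf_nonneg hf_ne
  have hmax_value := integral_mul_log_abs_entropyMaximizer (p := p) hf hf_nonneg hf_ne hflog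
  refine ⟨fun x hx_meas hx_int hx_le hx_log hx_ac =>
      upper_bound ⟨hx_meas, hx_int, hx_le, hx_log, hx_ac⟩,
    ⟨hmeas, hrpow, hmax_norm, hlog, hmax_value⟩,
    ⟨entropyMaximizer μ p f, hmeas, hrpow, hle, hlog, hac, hmax_value.symm⟩, ?_⟩
  rintro _ ⟨x, hx_meas, hx_int, hx_le, hx_log, hx_ac, rfl⟩
  exact upper_bound ⟨hx_meas, hx_int, hx_le, hx_log, hx_ac⟩

theorem stmt1 {S : Type*} [MeasurableSpace S] (μ : Measure S) [SigmaFinite μ]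
    (p : ℝ) (hp : 1 ≤ p)
    (f : S → ℝ) (hf : Integrable f μ) (hf_nonneg : 0 ≤ᵐ[μ] f) (hf_ne : ¬ f =ᵐ[μ] 0)
    (hflog : Integrable (fun s => f s * Real.log (f s)) μ) :
    (∀ x : S → ℝ, AEStronglyMeasurable x μ → Integrable (fun s => |x s| ^ p) μ →
        (∫ s, |x s| ^ p ∂μ) ≤ 1 →
        Integrable (fun s => f s * Real.log |x s|) μ →
        (∀ᵐ s ∂μ, f s = 0 ∨ x s ≠ 0) →
        (∫ s, f s * Real.log |x s| ∂μ) ≤ (1 / p) * Phi1 μ f) ∧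
    (AEStronglyMeasurable (fun s => (f s / ∫ u, f u ∂μ) ^ (1 / p)) μ ∧
      Integrable (fun s => |(f s / ∫ u, f u ∂μ) ^ (1 / p)| ^ p) μ ∧
      (∫ s, |(f s / ∫ u, f u ∂μ) ^ (1 / p)| ^ p ∂μ) = 1 ∧
      Integrable (fun s => f s * Real.log |(f s / ∫ u, f u ∂μ) ^ (1 / p)|) μ ∧
      (∫ s, f s * Real.log |(f s / ∫ u, f u ∂μ) ^ (1 / p)| ∂μ) = (1 / p) * Phi1 μ f) ∧
    IsGreatest
      {r : ℝ | ∃ x : S → ℝ, AEStronglyMeasurable x μ ∧ Integrable (fun s => |x s| ^ p) μ ∧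
        (∫ s, |x s| ^ p ∂μ) ≤ 1 ∧
        Integrable (fun s => f s * Real.log |x s|) μ ∧
        (∀ᵐ s ∂μ, f s = 0 ∨ x s ≠ 0) ∧
        r = ∫ s, f s * Real.log |x s| ∂μ}
      ((1 / p) * Phi1 μ f) :=
  stmt1_general μ p (one_pos.trans_le hp) f hf hf_nonneg hf_ne hflog
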